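/- arXiv:2203.10394 — 9 statements merged into one kernel-verified Lean document; each statement's English description precedes it below -/
import Mathlib

section
/- Let C be an entropy space, λ : C → C a lower map and α ∈ C. Then h(λ, α) = lim_{n→∞} (1/n)·h(α_0^{n-1}) = inf_{n≥1} (1/n)·h(α_0^{n-1}); in particular the limit exists. Moreover, if h(β) < ∞ for every β ∈ C, then h(λ, α) < ∞. -/
open Filter ENNReal Topology

/-- An *entropy space*: a pre-ordered semigroup `(C, ≺, ∧)` satisfying (C1) and (C2),
together with an entropy function `h : C → [0,∞]` satisfying (H1) and (H2). -/
structure EntropySpace (C : Type*) where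
  prec : C → C → Prop
  meet : C → C → C
  h : C → ℝ≥0∞
  prec_refl : ∀ a, prec a a
  prec_trans : ∀ a b c, prec a b → prec b c → prec a c
  meet_assoc : ∀ a b c, meet (meet a b) c = meet a (meet b c)
  c1_left : ∀ a b, prec (meet a b) a
  c1_right : ∀ a b, prec (meet a b) b
  c2 : ∀ a a' b b', prec a a' → prec b b' → prec (meet a b) (meet a' b')
  h1 : ∀ a b, prec a b → h b ≤ h a
  h2 : ∀ a b, h (meet a b) ≤ h a + h b

variable {C : Type*}

/-- `α_0^n[λ] = α ∧ λα ∧ ⋯ ∧ λ^n α` (a product of `n + 1` factors). -/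
def EntropySpace.orbitProd (E : EntropySpace C) (l : C → C) (a : C) : ℕ → C
  | 0 => a
  | n + 1 => E.meet (E.orbitProd l a n) (l^[n + 1] a)

/-- `h(λ, α) = limsup_{n → ∞} (1/n) · h(α_0^{n-1}[λ])`, computed in `[0,∞]`. -/
noncomputable def EntropySpace.relEntropy (E : EntropySpace C) (l : C → C) (a : C) : ℝ≥0∞ :=
  Filter.atTop.limsup fun n : ℕ => E.h (E.orbitProd l a n) / ((n : ℝ≥0∞) + 1)

/-- `h(λ) = sup_{α ∈ C} h(λ, α)`. -/
noncomputable def EntropySpace.entropy (E : EntropySpace C) (l : C → C) : ℝ≥0∞ :=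
  ⨆ a : C, E.relEntropy l a

theorem EntropySpace.orbitProd_split (E : EntropySpace C) (l : C → C) (a : C) (m n : ℕ) :
    E.orbitProd l a (m + n + 1) =
      E.meet (E.orbitProd l a m) (E.orbitProd l (l^[m + 1] a) n) := by
  induction n with
  | zero => rfl
  | succ n ih =>
    have e : l^[m + (n + 1) + 1] a = l^[n + 1] (l^[m + 1] a) := by
      rw [← Function.iterate_add_apply,
        show n + 1 + (m + 1) = m + (n + 1) + 1 by omega]
    change E.meet (E.orbitProd l a (m + n + 1)) (l^[m + (n + 1) + 1] a) = E.meet _ (E.meet _ _)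
    rw [ih, E.meet_assoc, e]

theorem EntropySpace.prec_orbitProd (E : EntropySpace C) (l : C → C)
    (hl1 : ∀ a b, E.prec (l (E.meet a b)) (E.meet (l a) (l b))) (a : C) (n : ℕ) :
    E.prec (l (E.orbitProd l a n)) (E.orbitProd l (l a) n) := by
  induction n with
  | zero => exact E.prec_refl _
  | succ n ih =>
    refine E.prec_trans _ _ _ (hl1 _ _) (E.c2 _ _ _ _ ih ?_)
    rw [← Function.iterate_succ_apply' l, Function.iterate_succ_apply l (n + 1) a]
    exact E.prec_refl _

theorem EntropySpace.h_orbitProd_iterate (E : EntropySpace C) (l : C → C)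
    (hl1 : ∀ a b, E.prec (l (E.meet a b)) (E.meet (l a) (l b)))
    (hl2 : ∀ a, E.h (l a) ≤ E.h a) (a : C) (n k : ℕ) :
    E.h (E.orbitProd l (l^[k] a) n) ≤ E.h (E.orbitProd l a n) := by
  induction k with
  | zero => exact le_rfl
  | succ k ih =>
    rw [Function.iterate_succ_apply']
    exact ((E.h1 _ _ (E.prec_orbitProd l hl1 _ n)).trans (hl2 _)).trans ih

theorem EntropySpace.h_orbitProd_add (E : EntropySpace C) (l : C → C)
    (hl1 : ∀ a b, E.prec (l (E.meet a b)) (E.meet (l a) (l b)))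
    (hl2 : ∀ a, E.h (l a) ≤ E.h a) (a : C) (m n : ℕ) :
    E.h (E.orbitProd l a (m + n + 1)) ≤ E.h (E.orbitProd l a m) + E.h (E.orbitProd l a n) := by
  rw [E.orbitProd_split]
  exact (E.h2 _ _).trans (add_le_add le_rfl (E.h_orbitProd_iterate l hl1 hl2 a n (m + 1)))

/-- Fekete's lemma in `[0,∞]`, for the shifted sequence. -/
theorem fekete_shift (v : ℕ → ℝ≥0∞) (hv : ∀ m n, v (m + n + 1) ≤ v m + v n)
    (hfin : ∀ n, v n ≠ ⊤) :
    Tendsto (fun n : ℕ => v n / ((n : ℝ≥0∞) + 1)) atTop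
      (𝓝 (⨅ n : ℕ, v n / ((n : ℝ≥0∞) + 1))) := by
  let u : ℕ → ℝ := fun n => match n with
    | 0 => 0
    | n + 1 => (v n).toReal
  have hu : Subadditive u := by
    intro m n
    cases m with
    | zero => simp [u]
    | succ m =>
      cases n with
      | zero => simp [u]
      | succ n =>
        have e : m + 1 + (n + 1) = (m + n + 1) + 1 := by omega
        rw [e]
        change (v (m + n + 1)).toReal ≤ (v m).toReal + (v n).toReal
        rw [← ENNReal.toReal_add (hfin m) (hfin n)]
        exact ENNReal.toReal_mono (ENNReal.add_ne_top.2 ⟨hfin m, hfin n⟩) (hv m n)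
  have hu0 : ∀ n, 0 ≤ u n := by
    intro n
    cases n with
    | zero => exact le_rfl
    | succ n => exact ENNReal.toReal_nonneg
  have hb : BddBelow (Set.range fun n => u n / n) := by
    refine ⟨0, ?_⟩
    rintro _ ⟨n, rfl⟩
    exact div_nonneg (hu0 n) (Nat.cast_nonneg n)
  have key : ∀ n : ℕ, ENNReal.ofReal (u (n + 1) / ((n + 1 : ℕ) : ℝ)) = v n / ((n : ℝ≥0∞) + 1) := by
    intro n
    rw [ENNReal.ofReal_div_of_pos (by positivity), ENNReal.ofReal_natCast]
    change ENNReal.ofReal (v n).toReal / _ = _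
    rw [ENNReal.ofReal_toReal (hfin n)]
    push_cast
    rfl
  have ht : Tendsto (fun n : ℕ => v n / ((n : ℝ≥0∞) + 1)) atTop (𝓝 (ENNReal.ofReal hu.lim)) := by
    have := ENNReal.tendsto_ofReal ((hu.tendsto_lim hb).comp (tendsto_add_atTop_nat 1))
    exact this.congr key
  have hle : ∀ n : ℕ, ENNReal.ofReal hu.lim ≤ v n / ((n : ℝ≥0∞) + 1) := by
    intro n
    rw [← key]
    exact ENNReal.ofReal_le_ofReal (hu.lim_le_div hb (Nat.succ_ne_zero n))
  have heq : (⨅ n : ℕ, v n / ((n : ℝ≥0∞) + 1)) = ENNReal.ofReal hu.lim :=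
    le_antisymm (ge_of_tendsto' ht fun n => iInf_le _ n) (le_iInf hle)
  rw [heq]
  exact ht

/-- If `λ` is a lower map, then `h(λ, α)` is a limit and equals the infimum
`inf_{n ≥ 1} (1/n) h(α_0^{n-1})`; moreover it is finite whenever `h` is finite. -/
theorem stmt_3 (E : EntropySpace C) (l : C → C)
    (hmono : ∀ a b, E.prec a b → E.prec (l a) (l b))
    (hl1 : ∀ a b, E.prec (l (E.meet a b)) (E.meet (l a) (l b)))
    (hl2 : ∀ a, E.h (l a) ≤ E.h a)
    (a : C) :
    Tendsto (fun n : ℕ => E.h (E.orbitProd l a n) / ((n : ℝ≥0∞) + 1)) atTop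
      (𝓝 (E.relEntropy l a)) ∧
    (E.relEntropy l a = ⨅ n : ℕ, E.h (E.orbitProd l a n) / ((n : ℝ≥0∞) + 1)) ∧
    ((∀ b : C, E.h b < ⊤) → E.relEntropy l a < ⊤) := by
  have hsub := E.h_orbitProd_add l hl1 hl2 a
  have main : Tendsto (fun n : ℕ => E.h (E.orbitProd l a n) / ((n : ℝ≥0∞) + 1)) atTop
      (𝓝 (⨅ n : ℕ, E.h (E.orbitProd l a n) / ((n : ℝ≥0∞) + 1))) := by
    by_cases ha : E.h a = ⊤
    · have htop : ∀ n, E.h (E.orbitProd l a n) = ⊤ := by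
        intro n
        induction n with
        | zero => exact ha
        | succ n ih => exact top_le_iff.1 (ih ▸ E.h1 _ _ (E.c1_left _ _))
      have hq : ∀ n : ℕ, E.h (E.orbitProd l a n) / ((n : ℝ≥0∞) + 1) = ⊤ := by
        intro n
        rw [htop n]
        exact ENNReal.top_div_of_ne_top (by finiteness)
      simp only [hq, iInf_const]
      exact tendsto_const_nhds
    · refine fekete_shift _ hsub fun n => ?_
      induction n with
      | zero => exact ha
      | succ n ih => exact ne_top_of_le_ne_top (ENNReal.add_ne_top.2 ⟨ih, ha⟩) (hsub n 0)
  have heq : E.relEntropy l a = ⨅ n : ℕ, E.h (E.orbitProd l a n) / ((n : ℝ≥0∞) + 1) :=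
    main.limsup_eq
  refine ⟨heq ▸ main, heq, fun hf => ?_⟩
  rw [heq]
  refine (iInf_le _ 0).trans_lt ?_
  simpa using hf (E.orbitProd l a 0)
end

section
/- Let C be a commutative entropy space, λ : C → C a morphism, and α, β ∈ C. Then h(λ, α∧β) ≤ h(λ, α) + h(λ, β). -/
open Filter ENNReal Topology

variable {C : Type*}

theorem ennreal_limsup_add_le_aux (u v : ℕ → ℝ≥0∞) :
    Filter.atTop.limsup (u + v) ≤ Filter.atTop.limsup u + Filter.atTop.limsup v := by
  refine ENNReal.le_of_forall_pos_le_add fun ε hε hlt => ?_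
  obtain ⟨hu, hv⟩ := ENNReal.add_lt_top.1 hlt
  have hε2 : ((ε : ℝ≥0∞) / 2) ≠ 0 := by
    simpa using hε.ne'
  have h1 := Filter.eventually_lt_of_limsup_lt (ENNReal.lt_add_right hu.ne hε2)
  have h2 := Filter.eventually_lt_of_limsup_lt (ENNReal.lt_add_right hv.ne hε2)
  refine Filter.limsup_le_of_le (by isBoundedDefault) ?_
  filter_upwards [h1, h2] with n hn1 hn2
  refine (add_le_add hn1.le hn2.le).trans (le_of_eq ?_)
  rw [add_add_add_comm, ENNReal.add_halves]

theorem iterate_meet_prec (E : EntropySpace C) (l : C → C)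
    (hmono : ∀ a b, E.prec a b → E.prec (l a) (l b))
    (hm1 : ∀ a b, E.prec (E.meet (l a) (l b)) (l (E.meet a b)))
    (a b : C) (n : ℕ) :
    E.prec (E.meet (l^[n] a) (l^[n] b)) (l^[n] (E.meet a b)) := by
  induction n with
  | zero => exact E.prec_refl _
  | succ n ih =>
    simp only [Function.iterate_succ_apply']
    exact E.prec_trans _ _ _ (hm1 _ _) (hmono _ _ ih)

theorem orbitProd_meet_prec (E : EntropySpace C)
    (hcomm : ∀ a b, E.prec (E.meet a b) (E.meet b a)) (l : C → C)
    (hmono : ∀ a b, E.prec a b → E.prec (l a) (l b))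
    (hm1 : ∀ a b, E.prec (E.meet (l a) (l b)) (l (E.meet a b)))
    (a b : C) (n : ℕ) :
    E.prec (E.meet (E.orbitProd l a n) (E.orbitProd l b n))
      (E.orbitProd l (E.meet a b) n) := by
  induction n with
  | zero => exact E.prec_refl _
  | succ n ih =>
    simp only [EntropySpace.orbitProd]
    refine E.prec_trans _ _ _ ?_
      (E.c2 _ _ _ _ ih (iterate_meet_prec E l hmono hm1 a b (n + 1)))
    rw [E.meet_assoc, E.meet_assoc, ← E.meet_assoc (l^[n + 1] a),
      ← E.meet_assoc (E.orbitProd l b n)]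
    exact E.c2 _ _ _ _ (E.prec_refl _) (E.c2 _ _ _ _ (hcomm _ _) (E.prec_refl _))

/-- If `C` is commutative and `λ` is a morphism, then `h(λ, α∧β) ≤ h(λ, α) + h(λ, β)`. -/
theorem stmt_4 (E : EntropySpace C)
    (hcomm : ∀ a b, E.prec (E.meet a b) (E.meet b a))
    (l : C → C)
    (hmono : ∀ a b, E.prec a b → E.prec (l a) (l b))
    (hm1 : ∀ a b, E.prec (l (E.meet a b)) (E.meet (l a) (l b)) ∧
      E.prec (E.meet (l a) (l b)) (l (E.meet a b)))
    (a b : C) :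
    E.relEntropy l (E.meet a b) ≤ E.relEntropy l a + E.relEntropy l b := by
  unfold EntropySpace.relEntropy
  refine le_trans (Filter.limsup_le_limsup (Filter.Eventually.of_forall fun n => ?_))
    (ennreal_limsup_add_le_aux _ _)
  simp only [Pi.add_apply]
  rw [← ENNReal.add_div]
  refine ENNReal.div_le_div_right ?_ _
  exact (E.h1 _ _ (orbitProd_meet_prec E hcomm l hmono (fun a b => (hm1 a b).2) a b n)).trans
    (E.h2 _ _)
end

section
/- Let C be an entropy space and λ : C → C an isomorphism. Then for every α ∈ C, h(λ, α) = lim_{n→∞} (1/(2n+1))·h(α_{-n}^n), where α_{-n}^n = λ^{-n}α ∧ λ^{-n+1}α ∧ ⋯ ∧ λ^{n}α. -/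
open Filter ENNReal Topology

variable {C : Type*}

/-- `λ^k α` for `k ∈ ℤ`, where `li = λ⁻¹`. -/
def zpIter (l li : C → C) (k : ℤ) (a : C) : C :=
  if 0 ≤ k then l^[k.toNat] a else li^[(-k).toNat] a

/-- `α_{-n}^n = λ^{-n}α ∧ λ^{-n+1}α ∧ ⋯ ∧ λ^n α` (a product of `2n + 1` factors). -/
noncomputable def EntropySpace.biProd (E : EntropySpace C) (l li : C → C) (a : C) (n : ℕ) : C :=
  (List.range (2 * n)).foldl
    (fun c j => E.meet c (zpIter l li (-(n : ℤ) + j + 1) a))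
    (zpIter l li (-(n : ℤ)) a)


lemma EntropySpace.prec_iter_meet (E : EntropySpace C) (l : C → C)
    (hmono : ∀ a b, E.prec a b → E.prec (l a) (l b))
    (hm1 : ∀ a b, E.prec (l (E.meet a b)) (E.meet (l a) (l b)) ∧
      E.prec (E.meet (l a) (l b)) (l (E.meet a b))) (n : ℕ) (a b : C) :
    E.prec (l^[n] (E.meet a b)) (E.meet (l^[n] a) (l^[n] b)) ∧
      E.prec (E.meet (l^[n] a) (l^[n] b)) (l^[n] (E.meet a b)) := by
  induction n with
  | zero => exact ⟨E.prec_refl _, E.prec_refl _⟩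
  | succ n ih =>
    simp only [Function.iterate_succ_apply']
    exact ⟨E.prec_trans _ _ _ (hmono _ _ ih.1) (hm1 _ _).1,
      E.prec_trans _ _ _ (hm1 _ _).2 (hmono _ _ ih.2)⟩

lemma EntropySpace.h_iter (E : EntropySpace C) (l : C → C)
    (hm2 : ∀ a, E.h (l a) = E.h a) (n : ℕ) (a : C) : E.h (l^[n] a) = E.h a := by
  induction n with
  | zero => rfl
  | succ n ih => rw [Function.iterate_succ_apply', hm2, ih]

lemma EntropySpace.orbit_split (E : EntropySpace C) (l : C → C)
    (hmono : ∀ a b, E.prec a b → E.prec (l a) (l b))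
    (hm1 : ∀ a b, E.prec (l (E.meet a b)) (E.meet (l a) (l b)) ∧
      E.prec (E.meet (l a) (l b)) (l (E.meet a b))) (a : C) (m k : ℕ) :
    E.prec (E.meet (E.orbitProd l a m) (l^[m + 1] (E.orbitProd l a k)))
      (E.orbitProd l a (m + k + 1)) := by
  induction k with
  | zero => exact E.prec_refl _
  | succ k ih =>
    have h1 := (E.prec_iter_meet l hmono hm1 (m + 1) (E.orbitProd l a k) (l^[k + 1] a)).1
    have h2 := E.c2 _ _ _ _ (E.prec_refl (E.orbitProd l a m)) h1
    rw [← E.meet_assoc, ← Function.iterate_add_apply] at h2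
    refine E.prec_trans _ _ _ h2 ?_
    have h3 : m + 1 + (k + 1) = m + k + 1 + 1 := by omega
    rw [h3]
    exact E.c2 _ _ _ _ ih (E.prec_refl _)

lemma EntropySpace.orbit_prec (E : EntropySpace C) (l : C → C) (a : C) (n : ℕ) :
    E.prec (E.orbitProd l a n) a := by
  induction n with
  | zero => exact E.prec_refl _
  | succ n ih => exact E.prec_trans _ _ _ (E.c1_left _ _) ih

lemma EntropySpace.exists_lim (E : EntropySpace C) (l : C → C)
    (hmono : ∀ a b, E.prec a b → E.prec (l a) (l b))
    (hm1 : ∀ a b, E.prec (l (E.meet a b)) (E.meet (l a) (l b)) ∧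
      E.prec (E.meet (l a) (l b)) (l (E.meet a b)))
    (hm2 : ∀ a, E.h (l a) = E.h a) (a : C) :
    ∃ L, Tendsto (fun n : ℕ => E.h (E.orbitProd l a n) / ((n : ℝ≥0∞) + 1)) atTop (𝓝 L) := by
  by_cases ha : E.h a = ⊤
  · refine ⟨⊤, ?_⟩
    have : (fun n : ℕ => E.h (E.orbitProd l a n) / ((n : ℝ≥0∞) + 1)) = fun _ => ⊤ := by
      funext n
      have h1 := E.h1 _ _ (E.orbit_prec l a n)
      rw [ha, top_le_iff] at h1
      rw [h1]
      exact ENNReal.top_div_of_ne_top (by finiteness)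
    rw [this]
    exact tendsto_const_nhds
  · have hfin : ∀ n, E.h (E.orbitProd l a n) ≠ ⊤ := by
      intro n
      induction n with
      | zero => exact ha
      | succ n ih =>
        refine ne_top_of_le_ne_top (ENNReal.add_ne_top.2 ⟨ih, ?_⟩) (E.h2 _ _)
        rwa [E.h_iter l hm2]
    let u : ℕ → ℝ := fun n => match n with
      | 0 => 0
      | n + 1 => (E.h (E.orbitProd l a n)).toReal
    have hu : ∀ n, 0 ≤ u n := by
      intro n
      cases n with
      | zero => exact le_rfl
      | succ n => exact ENNReal.toReal_nonneg
    have hsub : Subadditive u := by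
      intro m n
      cases m with
      | zero => simp [u]
      | succ m =>
        cases n with
        | zero => simp [u]
        | succ n =>
          have e : m + 1 + (n + 1) = (m + n + 1) + 1 := by omega
          rw [e]
          change (E.h (E.orbitProd l a (m + n + 1))).toReal ≤
            (E.h (E.orbitProd l a m)).toReal + (E.h (E.orbitProd l a n)).toReal
          rw [← ENNReal.toReal_add (hfin _) (hfin _)]
          refine ENNReal.toReal_mono (ENNReal.add_ne_top.2 ⟨hfin _, hfin _⟩) ?_
          refine (E.h1 _ _ (E.orbit_split l hmono hm1 a m n)).trans ?_
          refine (E.h2 _ _).trans ?_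
          rw [E.h_iter l hm2]
    have hb : BddBelow (Set.range fun n => u n / n) := by
      refine ⟨0, ?_⟩
      rintro _ ⟨n, rfl⟩
      exact div_nonneg (hu n) (Nat.cast_nonneg n)
    have ht := hsub.tendsto_lim hb
    refine ⟨ENNReal.ofReal hsub.lim, ?_⟩
    have h2 := (ENNReal.tendsto_ofReal ht).comp (tendsto_add_atTop_nat 1)
    refine h2.congr ?_
    intro n
    change ENNReal.ofReal ((E.h (E.orbitProd l a n)).toReal / ((n + 1 : ℕ) : ℝ)) = _
    rw [ENNReal.ofReal_div_of_pos (by positivity), ENNReal.ofReal_toReal (hfin n),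
      ENNReal.ofReal_natCast]
    push_cast
    rfl

lemma zpIter_eq (l li : C → C) (hinv₁ : Function.LeftInverse li l) (n j : ℕ) (a : C) :
    zpIter l li (-(n : ℤ) + j) a = li^[n] (l^[j] a) := by
  unfold zpIter
  split_ifs with h
  · obtain ⟨k, rfl⟩ : ∃ k, j = n + k := ⟨j - n, by omega⟩
    have : (-(n : ℤ) + ((n + k : ℕ) : ℤ)).toNat = k := by omega
    rw [this, Function.iterate_add_apply, hinv₁.iterate n]
  · obtain ⟨k, rfl⟩ : ∃ k, n = k + j := ⟨n - j, by omega⟩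
    have : (-(-((k + j : ℕ) : ℤ) + (j : ℤ))).toNat = k := by omega
    rw [this, Function.iterate_add_apply, hinv₁.iterate j]

lemma EntropySpace.h_biProd (E : EntropySpace C) (l li : C → C)
    (hinv₁ : Function.LeftInverse li l)
    (hmono' : ∀ a b, E.prec a b → E.prec (li a) (li b))
    (hm1' : ∀ a b, E.prec (li (E.meet a b)) (E.meet (li a) (li b)) ∧
      E.prec (E.meet (li a) (li b)) (li (E.meet a b)))
    (hm2' : ∀ a, E.h (li a) = E.h a) (a : C) (n : ℕ) :
    E.h (E.biProd l li a n) = E.h (E.orbitProd l a (2 * n)) := by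
  have key : ∀ m : ℕ,
      E.prec ((List.range m).foldl
        (fun c j => E.meet c (zpIter l li (-(n : ℤ) + j + 1) a)) (zpIter l li (-(n : ℤ)) a))
        (li^[n] (E.orbitProd l a m)) ∧
      E.prec (li^[n] (E.orbitProd l a m)) ((List.range m).foldl
        (fun c j => E.meet c (zpIter l li (-(n : ℤ) + j + 1) a)) (zpIter l li (-(n : ℤ)) a)) := by
    intro m
    induction m with
    | zero =>
      have h := zpIter_eq l li hinv₁ n 0 a
      simp only [Nat.cast_zero, add_zero, Function.iterate_zero, id] at h
      simp only [List.range_zero, h]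
      exact ⟨E.prec_refl _, E.prec_refl _⟩
    | succ m ih =>
      have h := zpIter_eq l li hinv₁ n (m + 1) a
      rw [Nat.cast_add, Nat.cast_one, ← add_assoc] at h
      simp only [List.bind_eq_flatMap] at ih ⊢
      rw [List.range_succ, List.flatMap_append, List.foldl_append, List.flatMap_singleton,
        List.pure_def, List.foldl_cons, List.foldl_nil, h]
      have hp := E.prec_iter_meet li hmono' hm1' n (E.orbitProd l a m) (l^[m + 1] a)
      exact ⟨E.prec_trans _ _ _ (E.c2 _ _ _ _ ih.1 (E.prec_refl _)) hp.2,
        E.prec_trans _ _ _ hp.1 (E.c2 _ _ _ _ ih.2 (E.prec_refl _))⟩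
  rw [← E.h_iter li hm2' n (E.orbitProd l a (2 * n))]
  exact le_antisymm (E.h1 _ _ (key _).2) (E.h1 _ _ (key _).1)

/-- If `λ` is an isomorphism (with inverse `λ⁻¹ = li`), then
`h(λ, α) = lim_{n → ∞} (1/(2n+1)) · h(α_{-n}^n)`. -/
theorem stmt_6 (E : EntropySpace C) (l li : C → C)
    (hinv₁ : Function.LeftInverse li l) (hinv₂ : Function.RightInverse li l)
    (hmono : ∀ a b, E.prec a b → E.prec (l a) (l b))
    (hm1 : ∀ a b, E.prec (l (E.meet a b)) (E.meet (l a) (l b)) ∧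
      E.prec (E.meet (l a) (l b)) (l (E.meet a b)))
    (hm2 : ∀ a, E.h (l a) = E.h a)
    (hmono' : ∀ a b, E.prec a b → E.prec (li a) (li b))
    (hm1' : ∀ a b, E.prec (li (E.meet a b)) (E.meet (li a) (li b)) ∧
      E.prec (E.meet (li a) (li b)) (li (E.meet a b)))
    (hm2' : ∀ a, E.h (li a) = E.h a)
    (a : C) :
    Tendsto (fun n : ℕ => E.h (E.biProd l li a n) / ((2 * n + 1 : ℕ) : ℝ≥0∞)) atTop
      (𝓝 (E.relEntropy l a)) := by
  obtain ⟨L, hL⟩ := E.exists_lim l hmono hm1 hm2 a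
  have hr : E.relEntropy l a = L := hL.limsup_eq
  rw [hr]
  have h2 : Tendsto (fun n : ℕ => 2 * n) atTop atTop :=
    tendsto_atTop_mono (fun n => by simp only [id]; omega) tendsto_id
  refine (hL.comp h2).congr ?_
  intro n
  rw [E.h_biProd l li hinv₁ hmono' hm1' hm2']
  simp
end

section
/- For i = 1, 2, let C_i be an entropy space with entropy function h_i and λ_i : C_i → C_i a map such that λ_2 is monotone. If μ : C_1 → C_2 is an upper connection from λ_1 to λ_2, then h_1(λ_1) ≤ h_2(λ_2). -/
open Filter ENNReal Topology

variable {C : Type*}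

/-- If `μ : λ₁ → λ₂` is an upper connection and `λ₂` is monotone, then `h(λ₁) ≤ h(λ₂)`. -/
theorem stmt_8 {C₁ C₂ : Type*} (E₁ : EntropySpace C₁) (E₂ : EntropySpace C₂)
    (l₁ : C₁ → C₁) (l₂ : C₂ → C₂)
    (hmono₂ : ∀ a b, E₂.prec a b → E₂.prec (l₂ a) (l₂ b))
    (μ : C₁ → C₂)
    (hμmono : ∀ a b, E₁.prec a b → E₂.prec (μ a) (μ b))
    (hu1 : ∀ a b, E₂.prec (E₂.meet (μ a) (μ b)) (μ (E₁.meet a b)))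
    (hu2 : ∀ a, E₁.h a ≤ E₂.h (μ a))
    (hu3 : ∀ a, E₂.prec (l₂ (μ a)) (μ (l₁ a))) :
    E₁.entropy l₁ ≤ E₂.entropy l₂ := by
  have hit : ∀ (a : C₁) (n : ℕ), E₂.prec (l₂^[n] (μ a)) (μ (l₁^[n] a)) := by
    intro a n
    induction n with
    | zero => exact E₂.prec_refl _
    | succ k ih =>
      rw [Function.iterate_succ_apply', Function.iterate_succ_apply']
      exact E₂.prec_trans _ _ _ (hmono₂ _ _ ih) (hu3 _)
  have horb : ∀ (a : C₁) (n : ℕ),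
      E₂.prec (E₂.orbitProd l₂ (μ a) n) (μ (E₁.orbitProd l₁ a n)) := by
    intro a n
    induction n with
    | zero => exact E₂.prec_refl _
    | succ k ih => exact E₂.prec_trans _ _ _ (E₂.c2 _ _ _ _ ih (hit a (k + 1))) (hu1 _ _)
  refine iSup_le fun a => le_trans ?_ (le_iSup (fun b => E₂.relEntropy l₂ b) (μ a))
  refine Filter.limsup_le_limsup (Filter.Eventually.of_forall fun n => ?_)
  exact ENNReal.div_le_div_right ((hu2 _).trans (E₂.h1 _ _ (horb a n))) _
end

section
/- For i = 1, 2, let C_i be an entropy space with entropy function h_i and λ_i : C_i → C_i a map such that λ_2 is monotone. If μ : C_1 → C_2 is a cofinal lower connection from λ_1 to λ_2, then h_1(λ_1) ≥ h_2(λ_2). -/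
open Filter ENNReal Topology

variable {C : Type*}

/-- If `μ : λ₁ → λ₂` is a cofinal lower connection and `λ₂` is monotone,
then `h(λ₁) ≥ h(λ₂)`. -/
theorem stmt_9 {C₁ C₂ : Type*} (E₁ : EntropySpace C₁) (E₂ : EntropySpace C₂)
    (l₁ : C₁ → C₁) (l₂ : C₂ → C₂)
    (hmono₂ : ∀ a b, E₂.prec a b → E₂.prec (l₂ a) (l₂ b))
    (μ : C₁ → C₂)
    (hμmono : ∀ a b, E₁.prec a b → E₂.prec (μ a) (μ b))
    (hl1 : ∀ a b, E₂.prec (μ (E₁.meet a b)) (E₂.meet (μ a) (μ b)))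
    (hl2 : ∀ a, E₂.h (μ a) ≤ E₁.h a)
    (hl3 : ∀ a, E₂.prec (μ (l₁ a)) (l₂ (μ a)))
    (hcof : ∀ a : C₂, ∃ b : C₁, E₂.prec (μ b) a) :
    E₂.entropy l₂ ≤ E₁.entropy l₁ := by
  have hit : ∀ (a : C₂) (b : C₁), E₂.prec (μ b) a → ∀ n, E₂.prec (μ (l₁^[n] b)) (l₂^[n] a) := by
    intro a b hab n
    induction n with
    | zero => exact hab
    | succ k ih =>
      rw [Function.iterate_succ_apply', Function.iterate_succ_apply']
      exact E₂.prec_trans _ _ _ (hl3 _) (hmono₂ _ _ ih)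
  have horb : ∀ (a : C₂) (b : C₁), E₂.prec (μ b) a →
      ∀ n, E₂.prec (μ (E₁.orbitProd l₁ b n)) (E₂.orbitProd l₂ a n) := by
    intro a b hab n
    induction n with
    | zero => exact hab
    | succ k ih =>
      exact E₂.prec_trans _ _ _ (hl1 _ _) (E₂.c2 _ _ _ _ ih (hit a b hab (k + 1)))
  refine iSup_le fun a => ?_
  obtain ⟨b, hb⟩ := hcof a
  refine le_trans ?_ (le_iSup (fun b => E₁.relEntropy l₁ b) b)
  refine Filter.limsup_le_limsup (Filter.Eventually.of_forall fun n => ?_)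
  exact ENNReal.div_le_div_right ((E₂.h1 _ _ (horb a b hb n)).trans (hl2 _)) _
end

section
/- Let C be a meet entropy space and λ : C → C a positively expansive morphism with positive generator α ∈ C. Then h(λ) = h(λ, α). -/
open Filter ENNReal Topology

variable {C : Type*}

theorem aux_iter_meet (E : EntropySpace C) (l : C → C)
    (hmono : ∀ a b, E.prec a b → E.prec (l a) (l b))
    (hm1 : ∀ a b, E.prec (E.meet (l a) (l b)) (l (E.meet a b))) (k : ℕ) (a b : C) :
    E.prec (E.meet (l^[k] a) (l^[k] b)) (l^[k] (E.meet a b)) := by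
  induction k with
  | zero => exact E.prec_refl _
  | succ k ih =>
    simp only [Function.iterate_succ_apply']
    exact E.prec_trans _ _ _ (hm1 _ _) (hmono _ _ ih)

theorem aux_iter_mono (E : EntropySpace C) (l : C → C)
    (hmono : ∀ a b, E.prec a b → E.prec (l a) (l b)) (k : ℕ) (a b : C) (h : E.prec a b) :
    E.prec (l^[k] a) (l^[k] b) := by
  induction k with
  | zero => exact h
  | succ k ih =>
    simp only [Function.iterate_succ_apply']
    exact hmono _ _ ih

theorem aux_orbit_prec (E : EntropySpace C) (l : C → C) (a : C) (n k : ℕ) (hk : k ≤ n) :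
    E.prec (E.orbitProd l a n) (l^[k] a) := by
  induction n with
  | zero =>
    obtain rfl : k = 0 := by omega
    exact E.prec_refl _
  | succ n ih =>
    rcases Nat.lt_or_ge n k with h | h
    · obtain rfl : k = n + 1 := by omega
      exact E.c1_right _ _
    · exact E.prec_trans _ _ _ (E.c1_left _ _) (ih h)

theorem aux_prec_orbit (E : EntropySpace C)
    (hmeet : ∀ a b c, E.prec c a → E.prec c b → E.prec c (E.meet a b))
    (l : C → C) (a c : C) (n : ℕ) (h : ∀ k ≤ n, E.prec c (l^[k] a)) :
    E.prec c (E.orbitProd l a n) := by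
  induction n with
  | zero => exact h 0 le_rfl
  | succ n ih =>
    exact hmeet _ _ _ (ih fun k hk => h k (by omega)) (h _ le_rfl)

theorem aux_prec_iter_orbit (E : EntropySpace C)
    (hmeet : ∀ a b c, E.prec c a → E.prec c b → E.prec c (E.meet a b))
    (l : C → C)
    (hmono : ∀ a b, E.prec a b → E.prec (l a) (l b))
    (hm1 : ∀ a b, E.prec (E.meet (l a) (l b)) (l (E.meet a b)))
    (a c : C) (k m : ℕ) (h : ∀ i ≤ k + m, E.prec c (l^[i] a)) :
    E.prec c (l^[k] (E.orbitProd l a m)) := by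
  induction m with
  | zero => exact h k le_rfl
  | succ m ih =>
    refine E.prec_trans _ _ _ (hmeet _ _ _ (ih fun i hi => h i (by omega)) ?_)
      (aux_iter_meet E l hmono hm1 k _ _)
    rw [← Function.iterate_add_apply]
    exact h _ le_rfl

theorem aux_ratio (m : ℕ) :
    Tendsto (fun n : ℕ => (((n + m : ℕ) : ℝ≥0∞) + 1) / ((n : ℝ≥0∞) + 1)) atTop (𝓝 1) := by
  have h1 : Tendsto (fun n : ℕ => 1 + (m : ℝ≥0∞) * ((n + 1 : ℕ) : ℝ≥0∞)⁻¹) atTop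
      (𝓝 (1 + (m : ℝ≥0∞) * 0)) := by
    refine Tendsto.add tendsto_const_nhds (ENNReal.Tendsto.const_mul ?_ (Or.inr (by simp)))
    exact ENNReal.tendsto_inv_nat_nhds_zero.comp (tendsto_add_atTop_nat 1)
  simp only [mul_zero, add_zero] at h1
  refine h1.congr fun n => ?_
  have : (((n + m : ℕ) : ℝ≥0∞) + 1) = ((n : ℝ≥0∞) + 1) + m := by push_cast; ring
  rw [this, ENNReal.add_div, ENNReal.div_self (by simp) (by simp), div_eq_mul_inv]
  push_cast
  rfl

/-- If `C` is a meet entropy space and `λ` is a positively expansive morphism with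
positive generator `α`, then `h(λ) = h(λ, α)`. -/
theorem stmt_11 (E : EntropySpace C)
    (hmeet : ∀ a b c, E.prec c a → E.prec c b → E.prec c (E.meet a b))
    (l : C → C)
    (hmono : ∀ a b, E.prec a b → E.prec (l a) (l b))
    (hm1 : ∀ a b, E.prec (l (E.meet a b)) (E.meet (l a) (l b)) ∧
      E.prec (E.meet (l a) (l b)) (l (E.meet a b)))
    (α : C)
    (hgen : ∀ b : C, ∃ m : ℕ, E.prec (E.orbitProd l α m) b) :
    E.entropy l = E.relEntropy l α := by
  refine le_antisymm (iSup_le fun b => ?_) (le_iSup (fun a => E.relEntropy l a) α)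
  obtain ⟨m, hm⟩ := hgen b
  have key : ∀ n, E.h (E.orbitProd l b n) ≤ E.h (E.orbitProd l α (n + m)) := fun n =>
    E.h1 _ _ (aux_prec_orbit E hmeet l b _ n fun k hk =>
      E.prec_trans _ _ _ (aux_prec_iter_orbit E hmeet l hmono (fun a b => (hm1 a b).2) α _ k m
        fun i hi => aux_orbit_prec E l α _ i (by omega)) (aux_iter_mono E l hmono k _ _ hm))
  have hlim := (aux_ratio m).limsup_eq
  unfold EntropySpace.relEntropy
  set u : ℕ → ℝ≥0∞ := fun n => E.h (E.orbitProd l α n) / ((n : ℝ≥0∞) + 1) with hu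
  set r : ℕ → ℝ≥0∞ := fun n => (((n + m : ℕ) : ℝ≥0∞) + 1) / ((n : ℝ≥0∞) + 1) with hr
  calc _ ≤ limsup ((fun n => u (n + m)) * r) atTop := by
        refine limsup_le_limsup (Eventually.of_forall fun n => ?_)
        simp only [Pi.mul_apply, hu, hr]
        rw [← mul_div_assoc, ENNReal.div_mul_cancel (by simp) (by finiteness)]
        exact ENNReal.div_le_div_right (key n) _
    _ ≤ limsup (fun n => u (n + m)) atTop * limsup r atTop :=
        ENNReal.limsup_mul_le' (Or.inr (by simp [hlim])) (Or.inr (by simp [hlim]))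
    _ = limsup u atTop := by rw [hlim, mul_one, limsup_nat_add]
end

section
/- Let C be a meet cover space and λ : C → C a positively expansive cofinal morphism. Then there exists β ∈ C such that: (1) λ^{n+1}β ≺ λ^n β for every n ∈ ℕ, and (2) for every γ ∈ C there exists n ∈ ℕ with λ^n β ≺ γ. -/
open Filter ENNReal Topology

/-- A *cover space*: a pre-ordered semigroup `(C, ≺, ∧)` satisfying (C1) and (C2). -/
structure CoverSpace (C : Type*) where
  prec : C → C → Prop
  meet : C → C → C
  prec_refl : ∀ a, prec a a
  prec_trans : ∀ a b c, prec a b → prec b c → prec a c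
  meet_assoc : ∀ a b c, meet (meet a b) c = meet a (meet b c)
  c1_left : ∀ a b, prec (meet a b) a
  c1_right : ∀ a b, prec (meet a b) b
  c2 : ∀ a a' b b', prec a a' → prec b b' → prec (meet a b) (meet a' b')

variable {C : Type*}

/-- `α_0^n[λ] = α ∧ λα ∧ ⋯ ∧ λ^n α` (a product of `n + 1` factors). -/
def CoverSpace.orbitProd (E : CoverSpace C) (l : C → C) (a : C) : ℕ → C
  | 0 => a
  | n + 1 => E.meet (E.orbitProd l a n) (l^[n + 1] a)

/-- If `C` is a meet cover space and `λ` a positively expansive cofinal morphism, then there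
is `β ∈ C` with `λ^{n+1}β ≺ λ^n β` for all `n`, whose iterates `λ^n β` are cofinal in `C`. -/
theorem stmt_12 (E : CoverSpace C)
    (hmeet : ∀ a b c, E.prec c a → E.prec c b → E.prec c (E.meet a b))
    (l : C → C)
    (hmono : ∀ a b, E.prec a b → E.prec (l a) (l b))
    (hm1 : ∀ a b, E.prec (l (E.meet a b)) (E.meet (l a) (l b)) ∧
      E.prec (E.meet (l a) (l b)) (l (E.meet a b)))
    (hcof : ∀ a : C, ∃ b : C, E.prec (l b) a)
    (hexp : ∃ α : C, ∀ b : C, ∃ m : ℕ, E.prec (E.orbitProd l α m) b) :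
    ∃ β : C, (∀ n : ℕ, E.prec (l^[n + 1] β) (l^[n] β)) ∧
      (∀ γ : C, ∃ n : ℕ, E.prec (l^[n] β) γ) := by
  obtain ⟨α, hα⟩ := hexp
  have hP : ∀ m j : ℕ, j ≤ m → E.prec (E.orbitProd l α m) (l^[j] α) := by
    intro m
    induction m with
    | zero =>
      intro j hj
      obtain rfl : j = 0 := by omega
      exact E.prec_refl _
    | succ k ih =>
      intro j hj
      rcases Nat.lt_or_ge k j with h | h
      · obtain rfl : j = k + 1 := by omega
        exact E.c1_right _ _
      · exact E.prec_trans _ _ _ (E.c1_left _ _) (ih j h)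
  have hG : ∀ (c : C) (m : ℕ), (∀ j ≤ m, E.prec c (l^[j] α)) →
      E.prec c (E.orbitProd l α m) := by
    intro c m
    induction m with
    | zero => intro h; exact h 0 le_rfl
    | succ k ih =>
      intro h
      exact hmeet _ _ _ (ih fun j hj => h j (by omega)) (h (k + 1) le_rfl)
  have hit : ∀ (n : ℕ) (a b : C), E.prec a b → E.prec (l^[n] a) (l^[n] b) := by
    intro n
    induction n with
    | zero => intro a b h; exact h
    | succ k ih => intro a b h; exact ih _ _ (hmono _ _ h)
  obtain ⟨δ, hδ⟩ := hcof α
  obtain ⟨m, hm⟩ := hα δ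
  have h1 : E.prec (l (E.orbitProd l α m)) (E.orbitProd l α m) := by
    apply hG
    intro j hj
    cases j with
    | zero => exact E.prec_trans _ _ _ (hmono _ _ hm) hδ
    | succ k =>
      rw [Function.iterate_succ_apply']
      exact hmono _ _ (hP m k (by omega))
  have hdec : ∀ n : ℕ, E.prec (l^[n + 1] (E.orbitProd l α m)) (l^[n] (E.orbitProd l α m)) :=
    fun n => hit n _ _ h1
  refine ⟨E.orbitProd l α m, hdec, fun γ => ?_⟩
  obtain ⟨n, hn⟩ := hα γ
  refine ⟨n, E.prec_trans _ _ _ (hG _ _ fun j hj => ?_) hn⟩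
  have hchain : E.prec (l^[n] (E.orbitProd l α m)) (l^[j] (E.orbitProd l α m)) := by
    clear hn
    induction n, hj using Nat.le_induction with
    | base => exact E.prec_refl _
    | succ k hk ih => exact E.prec_trans _ _ _ (hdec k) ih
  exact E.prec_trans _ _ _ hchain (hit j _ _ (hP m 0 (Nat.zero_le _)))
end

section
/- Let X be a topological space, T : X → X a continuous map, and X_1, X_2 extension closed subspaces of X such that X = X_1 ∪ X_2 and T(X_i) ⊆ X_i for i = 1, 2. Then h_top(T) = max{ h_top(T|_{X_1}), h_top(T|_{X_2}) }. -/
open Set Filter Topology ENNReal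

variable {X : Type*}

/-- `α` is an open cover of `X`: a family of open sets whose union is `X`. -/
def IsOpenCover [TopologicalSpace X] (α : Set (Set X)) : Prop :=
  (∀ U ∈ α, IsOpen U) ∧ ⋃₀ α = univ

/-- `α ≺ β`: every member of `α` is contained in some member of `β`. -/
def Refines (α β : Set (Set X)) : Prop := ∀ A ∈ α, ∃ B ∈ β, A ⊆ B

/-- The meet `α ∧ β = {A ∩ B : A ∈ α, B ∈ β}`. -/
def meetCov (α β : Set (Set X)) : Set (Set X) := Set.image2 (· ∩ ·) α β

/-- `N(α)`: the minimal cardinality of a finite subfamily of `α` covering `X`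
(`∞` if there is none), as an element of `[0,∞]`. -/
noncomputable def Ncov (α : Set (Set X)) : ℝ≥0∞ :=
  ⨅ (β : Finset (Set X)) (_ : (↑β : Set (Set X)) ⊆ α ∧ ⋃₀ (↑β : Set (Set X)) = univ),
    (β.card : ℝ≥0∞)

/-- The logarithm `[0,∞] → [0,∞]`, with `log 0 = 0` and `log ∞ = ∞`. -/
noncomputable def logE (x : ℝ≥0∞) : ℝ≥0∞ :=
  if x = ⊤ then ⊤ else ENNReal.ofReal (Real.log x.toReal)

/-- `H(α) = log N(α)`. -/
noncomputable def Hcov (α : Set (Set X)) : ℝ≥0∞ := logE (Ncov α)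

/-- `α ∧ T⁻¹α ∧ ⋯ ∧ T^{-n}α`. -/
def covProd (T : X → X) (α : Set (Set X)) : ℕ → Set (Set X)
  | 0 => α
  | n + 1 => meetCov (covProd T α n) ((fun U => T^[n + 1] ⁻¹' U) '' α)

/-- `h_top(T, α) = limsup_n (1/n)·H(α ∧ T⁻¹α ∧ ⋯ ∧ T^{-(n-1)}α)`. -/
noncomputable def htopRel (T : X → X) (α : Set (Set X)) : ℝ≥0∞ :=
  Filter.atTop.limsup fun n : ℕ => Hcov (covProd T α n) / ((n : ℝ≥0∞) + 1)

/-- The topological entropy `h_top(T) = sup_α h_top(T, α)` over all open covers `α`. -/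
noncomputable def htop [TopologicalSpace X] (T : X → X) : ℝ≥0∞ :=
  ⨆ (α : Set (Set X)) (_ : IsOpenCover α), htopRel T α

/-- `Y ⊆ X` is extension closed: every open cover of the subspace `Y` is of the form
`Y ∧ α` for some open cover `α` of `X`. -/
def ExtClosed [TopologicalSpace X] (Y : Set X) : Prop :=
  ∀ β : Set (Set ↥Y), IsOpenCover β →
    ∃ α : Set (Set X), IsOpenCover α ∧
      β = (fun A : Set X => (Subtype.val ⁻¹' A : Set ↥Y)) '' α

theorem logE_mono {x y : ℝ≥0∞} (h : x ≤ y) : logE x ≤ logE y := by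
  unfold logE
  by_cases hy : y = ⊤
  · simp [hy]
  have hx : x ≠ ⊤ := ne_top_of_le_ne_top hy h
  simp only [hx, hy, if_false]
  by_cases h0 : x = 0
  · simp [h0]
  · exact ENNReal.ofReal_le_ofReal (Real.log_le_log (ENNReal.toReal_pos h0 hx)
      (ENNReal.toReal_mono hy h))

theorem logE_two_mul (m : ℝ≥0∞) : logE (2 * m) ≤ ENNReal.ofReal (Real.log 2) + logE m := by
  unfold logE
  by_cases hm : m = ⊤
  · simp [hm]
  have h2 : 2 * m ≠ ⊤ := ENNReal.mul_ne_top (by simp) hm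
  simp only [hm, h2, if_false]
  by_cases h0 : m = 0
  · simp [h0]
  · rw [ENNReal.toReal_mul, Real.log_mul (by simp) (ENNReal.toReal_pos h0 hm).ne']
    exact ENNReal.ofReal_add_le

theorem logE_add (a b : ℝ≥0∞) :
    logE (a + b) ≤ ENNReal.ofReal (Real.log 2) + max (logE a) (logE b) := by
  refine (logE_mono (y := 2 * max a b) ?_).trans ((logE_two_mul _).trans ?_)
  · rw [two_mul]; gcongr
    · exact le_max_left _ _
    · exact le_max_right _ _
  · gcongr
    rcases le_total a b with h | h <;> simp [h]

/-- Trace of a family on a subset. -/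
def trc {X : Type*} (Y : Set X) (γ : Set (Set X)) : Set (Set ↥Y) :=
  (fun A : Set X => (Subtype.val ⁻¹' A : Set ↥Y)) '' γ

theorem restrict_iter {X : Type*} (T : X → X) (Y : Set X) (hi : MapsTo T Y Y) (n : ℕ) (y : Y) :
    (((MapsTo.restrict T Y Y hi)^[n] y : Y) : X) = T^[n] y := by
  induction n generalizing y with
  | zero => rfl
  | succ n ih => rw [Function.iterate_succ_apply, ih]; rfl

theorem covProd_trc {X : Type*} (T : X → X) (Y : Set X) (hi : MapsTo T Y Y)
    (α : Set (Set X)) (n : ℕ) :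
    covProd (MapsTo.restrict T Y Y hi) (trc Y α) n = trc Y (covProd T α n) := by
  induction n with
  | zero => rfl
  | succ n ih =>
    have key : ∀ C : Set X, ((MapsTo.restrict T Y Y hi)^[n + 1] ⁻¹' (Subtype.val ⁻¹' C) : Set Y)
        = Subtype.val ⁻¹' (T^[n + 1] ⁻¹' C) := by
      intro C; ext y
      simp only [mem_preimage, restrict_iter]
    simp only [covProd, ih]
    ext U
    simp only [meetCov, trc, mem_image2, mem_image]
    constructor
    · rintro ⟨_, ⟨A, hA, rfl⟩, _, ⟨_, ⟨C, hC, rfl⟩, rfl⟩, rfl⟩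
      exact ⟨_, ⟨A, hA, _, ⟨C, hC, rfl⟩, rfl⟩, by rw [key]; rfl⟩
    · rintro ⟨_, ⟨A, hA, _, ⟨C, hC, rfl⟩, rfl⟩, rfl⟩
      exact ⟨_, ⟨A, hA, rfl⟩, _, ⟨_, ⟨C, hC, rfl⟩, rfl⟩, by rw [key]; rfl⟩

theorem Ncov_trc_le {X : Type*} (Y : Set X) (γ : Set (Set X)) : Ncov (trc Y γ) ≤ Ncov γ := by
  classical
  unfold Ncov
  refine le_iInf₂ fun β hβ => ?_
  refine (iInf₂_le (β.image (fun A : Set X => (Subtype.val ⁻¹' A : Set ↥Y))) ⟨?_, ?_⟩).trans ?_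
  rotate_left
  · rw [Finset.coe_image]; exact image_mono hβ.1
  · rw [eq_univ_iff_forall]
    intro y
    have : (y : X) ∈ ⋃₀ (↑β : Set (Set X)) := by rw [hβ.2]; trivial
    obtain ⟨A, hA, hy⟩ := this
    exact ⟨_, by rw [Finset.coe_image]; exact mem_image_of_mem _ hA, hy⟩
  · exact_mod_cast Finset.card_image_le

theorem Ncov_le_add {X : Type*} (Y Z : Set X) (h : Y ∪ Z = univ) (γ : Set (Set X)) :
    Ncov γ ≤ Ncov (trc Y γ) + Ncov (trc Z γ) := by
  classical
  have lift : ∀ (W : Set X) (β : Finset (Set W)), (↑β : Set (Set W)) ⊆ trc W γ →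
      ⋃₀ (↑β : Set (Set W)) = univ → ∃ δ : Finset (Set X), (↑δ : Set (Set X)) ⊆ γ ∧
      W ⊆ ⋃₀ (↑δ : Set (Set X)) ∧ δ.card ≤ β.card := by
    intro W β h1 h2
    have : ∀ U : Set W, ∃ A : Set X, U ∈ β → A ∈ γ ∧ Subtype.val ⁻¹' A = U := by
      intro U
      by_cases hU : U ∈ β
      · obtain ⟨A, hA, hh⟩ := h1 hU
        exact ⟨A, fun _ => ⟨hA, hh⟩⟩
      · exact ⟨∅, fun h => absurd h hU⟩
    choose f hf using this
    refine ⟨β.image f, ?_, ?_, Finset.card_image_le⟩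
    · intro A hA
      simp only [Finset.coe_image, mem_image, Finset.mem_coe] at hA
      obtain ⟨U, hU, rfl⟩ := hA
      exact (hf U hU).1
    · intro w hw
      have : (⟨w, hw⟩ : W) ∈ ⋃₀ (↑β : Set (Set W)) := by rw [h2]; trivial
      obtain ⟨U, hU, hwU⟩ := this
      refine ⟨f U, by simpa using ⟨U, hU, rfl⟩, ?_⟩
      rw [← (hf U hU).2] at hwU
      exact hwU
  unfold Ncov
  refine ENNReal.le_iInf₂_add_iInf₂ fun β hβ β' hβ' => ?_
  obtain ⟨δ, a1, a2, a3⟩ := lift Y β hβ.1 hβ.2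
  obtain ⟨δ', b1, b2, b3⟩ := lift Z β' hβ'.1 hβ'.2
  refine (iInf₂_le (δ ∪ δ') ⟨?_, ?_⟩).trans ?_
  rotate_left
  · rw [Finset.coe_union]; exact union_subset a1 b1
  · rw [Finset.coe_union, sUnion_union]
    exact univ_subset_iff.1 (h ▸ union_subset_union a2 b2)
  · exact_mod_cast (Finset.card_union_le _ _).trans (add_le_add a3 b3)

theorem htopRel_trc_le {X : Type*} (T : X → X) (Y : Set X) (hi : MapsTo T Y Y)
    (α : Set (Set X)) : htopRel (MapsTo.restrict T Y Y hi) (trc Y α) ≤ htopRel T α := by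
  unfold htopRel
  refine limsup_le_limsup (Eventually.of_forall fun n => ?_)
  simp only [covProd_trc]
  exact ENNReal.div_le_div_right (logE_mono (Ncov_trc_le _ _)) _

theorem htop_restrict_le {X : Type*} [TopologicalSpace X] (T : X → X) (Y : Set X)
    (hi : MapsTo T Y Y) (hec : ExtClosed Y) : htop (MapsTo.restrict T Y Y hi) ≤ htop T := by
  refine iSup₂_le fun β hβ => ?_
  obtain ⟨α, hα, rfl⟩ := hec β hβ
  exact (htopRel_trc_le T Y hi α).trans (le_iSup₂ (f := fun α (_ : IsOpenCover α) => htopRel T α) α hα)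

theorem isOpenCover_trc {X : Type*} [TopologicalSpace X] (Y : Set X) (α : Set (Set X))
    (hα : IsOpenCover α) : IsOpenCover (trc Y α) := by
  constructor
  · rintro _ ⟨A, hA, rfl⟩
    exact (hα.1 A hA).preimage continuous_subtype_val
  · rw [eq_univ_iff_forall]
    intro y
    have : (y : X) ∈ ⋃₀ α := by rw [hα.2]; trivial
    obtain ⟨A, hA, hy⟩ := this
    exact ⟨_, ⟨A, hA, rfl⟩, hy⟩

theorem htopRel_le_max {X : Type*} (T : X → X) (Y Z : Set X) (h : Y ∪ Z = univ)
    (hY : MapsTo T Y Y) (hZ : MapsTo T Z Z) (α : Set (Set X)) :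
    htopRel T α ≤ max (htopRel (MapsTo.restrict T Y Y hY) (trc Y α))
      (htopRel (MapsTo.restrict T Z Z hZ) (trc Z α)) := by
  unfold htopRel
  rw [← limsup_max]
  have h0 : Tendsto (fun n : ℕ => ENNReal.ofReal (Real.log 2) / ((n : ℝ≥0∞) + 1)) atTop (𝓝 0) := by
    have := ENNReal.Tendsto.const_div (a := ENNReal.ofReal (Real.log 2))
      ((tendsto_add_atTop_iff_nat 1).2 ENNReal.tendsto_nat_nhds_top) (Or.inr ENNReal.ofReal_ne_top)
    simpa using this
  refine le_trans ?_ (ENNReal.limsup_add_of_left_tendsto_zero h0 _).le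
  refine limsup_le_limsup (Eventually.of_forall fun n => ?_)
  simp only [covProd_trc, Pi.add_apply]
  refine (ENNReal.div_le_div_right ((logE_mono (Ncov_le_add Y Z h _)).trans (logE_add _ _)) _).trans ?_
  rw [ENNReal.add_div]
  gcongr
  refine le_of_eq ?_
  exact Monotone.map_max (fun a b hab => ENNReal.div_le_div_right hab _)

/-- If `X = X₁ ∪ X₂` with `X₁`, `X₂` extension closed and `T`-invariant, then
`h_top(T) = max{h_top(T|_{X₁}), h_top(T|_{X₂})}`. -/
theorem stmt_16 {X : Type*} [TopologicalSpace X] (T : X → X) (hT : Continuous T)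
    (X₁ X₂ : Set X) (hec₁ : ExtClosed X₁) (hec₂ : ExtClosed X₂)
    (hunion : X₁ ∪ X₂ = univ)
    (hi₁ : MapsTo T X₁ X₁) (hi₂ : MapsTo T X₂ X₂) :
    htop T = max (htop (MapsTo.restrict T X₁ X₁ hi₁)) (htop (MapsTo.restrict T X₂ X₂ hi₂)) := by
  refine le_antisymm (iSup₂_le fun α hα => ?_)
    (max_le (htop_restrict_le T X₁ hi₁ hec₁) (htop_restrict_le T X₂ hi₂ hec₂))
  refine (htopRel_le_max T X₁ X₂ hunion hi₁ hi₂ α).trans (max_le_max ?_ ?_)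
  · exact le_iSup₂ (f := fun β (_ : IsOpenCover β) =>
      htopRel (MapsTo.restrict T X₁ X₁ hi₁) β) _ (isOpenCover_trc X₁ α hα)
  · exact le_iSup₂ (f := fun β (_ : IsOpenCover β) =>
      htopRel (MapsTo.restrict T X₂ X₂ hi₂) β) _ (isOpenCover_trc X₂ α hα)
end

section
/- Let X be a compact T1 topological space and T : X → X a continuous map that is an embedding (a homeomorphism onto its image T(X)), is positively refinement expansive, and has extension closed image T(X). Then X is finite. -/
open Set Filter Topology ENNReal

variable {X : Type*}

/-- `S` lies in a member of `T^{-j} α` for every `j ≤ m`. -/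
def SmallSet {X : Type*} (T : X → X) (α : Set (Set X)) (m : ℕ) (S : Set X) : Prop :=
  ∀ j ≤ m, ∃ U ∈ α, S ⊆ T^[j] ⁻¹' U

theorem SmallSet.exists_mem {X : Type*} {T : X → X} {α : Set (Set X)} {m : ℕ} {S : Set X}
    (h : SmallSet T α m S) : ∃ B ∈ covProd T α m, S ⊆ B := by
  induction m with
  | zero =>
    obtain ⟨U, hU, hS⟩ := h 0 le_rfl
    exact ⟨U, hU, hS⟩
  | succ m ih =>
    obtain ⟨B, hB, hSB⟩ := ih (fun j hj => h j (by omega))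
    obtain ⟨U, hU, hS⟩ := h (m + 1) le_rfl
    exact ⟨B ∩ T^[m + 1] ⁻¹' U, ⟨B, hB, _, ⟨U, hU, rfl⟩, rfl⟩, subset_inter hSB hS⟩

theorem smallSet_of_mem {X : Type*} {T : X → X} {α : Set (Set X)} {m : ℕ} :
    ∀ {B : Set X}, B ∈ covProd T α m → SmallSet T α m B := by
  induction m with
  | zero =>
    intro B hB j hj
    obtain rfl : j = 0 := by omega
    exact ⟨B, hB, fun x hx => hx⟩
  | succ m ih =>
    rintro B ⟨C, hC, D, ⟨U, hU, rfl⟩, rfl⟩ j hj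
    rcases Nat.lt_or_ge m j with h | h
    · obtain rfl : j = m + 1 := by omega
      exact ⟨U, hU, fun x hx => hx.2⟩
    · obtain ⟨V, hV, hCV⟩ := ih hC j h
      exact ⟨V, hV, fun x hx => hCV hx.1⟩

theorem isOpen_of_mem_covProd {X : Type*} [TopologicalSpace X] {T : X → X} (hT : Continuous T)
    {α : Set (Set X)} (hα : ∀ U ∈ α, IsOpen U) {m : ℕ} :
    ∀ {B : Set X}, B ∈ covProd T α m → IsOpen B := by
  induction m with
  | zero => exact fun {B} hB => hα B hB
  | succ m ih =>
    rintro B ⟨C, hC, D, ⟨U, hU, rfl⟩, rfl⟩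
    exact (ih hC).inter ((hα U hU).preimage (hT.iterate _))

/-- A compact `T₁` space admitting a positively refinement expansive embedding with
extension closed image is finite. -/
theorem stmt_17 {X : Type*} [TopologicalSpace X] [CompactSpace X] [T1Space X]
    (T : X → X) (hT : Continuous T) (hemb : IsEmbedding T)
    (hexp : ∃ α : Set (Set X), IsOpenCover α ∧
      ∀ β : Set (Set X), IsOpenCover β → ∃ n : ℕ, Refines (covProd T α n) β)
    (hec : ExtClosed (Set.range T)) :
    Finite X := by
  classical
  obtain ⟨α, ⟨hαo, hαc⟩, hgen⟩ := hexp
  -- one step: sets that are `n`-small pull back into a member of `α`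
  have key : ∃ n, ∀ S, SmallSet T α n S → ∃ U ∈ α, T ⁻¹' S ⊆ U := by
    obtain ⟨γ, hγ, hEq⟩ := hec ((fun U => (Subtype.val ⁻¹' (T '' U) : Set (range T))) '' α) (by
      constructor
      · rintro _ ⟨U, hU, rfl⟩
        obtain ⟨V, hV, rfl⟩ := hemb.isInducing.isOpen_iff.1 (hαo U hU)
        refine isOpen_induced_iff.2 ⟨V, hV, ?_⟩
        ext ⟨_, x, rfl⟩
        constructor
        · intro h
          exact ⟨x, h, rfl⟩
        · rintro ⟨y, hy, hxy⟩
          change T x ∈ V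
          rw [← show T y = T x from hxy]
          exact hy
      · refine eq_univ_of_forall ?_
        rintro ⟨_, x, rfl⟩
        obtain ⟨U, hU, hx⟩ := mem_sUnion.1 (hαc ▸ mem_univ x)
        exact ⟨_, ⟨U, hU, rfl⟩, x, hx, rfl⟩)
    obtain ⟨n, hn⟩ := hgen γ hγ
    refine ⟨n, fun S hS => ?_⟩
    obtain ⟨B, hB, hSB⟩ := hS.exists_mem
    obtain ⟨G, hG, hBG⟩ := hn B hB
    have hmem : (Subtype.val ⁻¹' G : Set (range T)) ∈
        (fun A : Set X => (Subtype.val ⁻¹' A : Set (range T))) '' γ := ⟨G, hG, rfl⟩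
    rw [← hEq] at hmem
    obtain ⟨U, hU, hUG⟩ := hmem
    refine ⟨U, hU, fun x hx => ?_⟩
    have h1 : (⟨T x, x, rfl⟩ : range T) ∈ (Subtype.val ⁻¹' G : Set (range T)) := hBG (hSB hx)
    rw [← hUG] at h1
    obtain ⟨y, hy, hxy⟩ := h1
    rwa [← hemb.injective (show T y = T x from hxy)]
  obtain ⟨n, hn⟩ := key
  have iter : ∀ k A, SmallSet T α n A → SmallSet T α (n + k) (T^[k] ⁻¹' A) := by
    intro k A hA
    induction k with
    | zero => exact hA
    | succ k ih =>
      have e : T^[k + 1] ⁻¹' A = T ⁻¹' (T^[k] ⁻¹' A) := rfl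
      rw [e]
      rintro (_ | j) hj
      · exact hn _ (fun i hi => ih i (by omega))
      · obtain ⟨U, hU, hs⟩ := ih j (by omega)
        exact ⟨U, hU, fun x hx => hs hx⟩
  obtain ⟨F, hFs, hFf, hFc⟩ : ∃ F ⊆ covProd T α n, F.Finite ∧ univ ⊆ ⋃₀ F := by
    obtain ⟨F, hFs, hFf, hFc⟩ := isCompact_univ.elim_finite_subcover_image
      (b := covProd T α n) (c := id) (fun B hB => isOpen_of_mem_covProd hT hαo hB) (by
        intro x _
        have : SmallSet T α n {x} := by
          intro j _
          obtain ⟨U, hU, hx⟩ := mem_sUnion.1 (hαc ▸ mem_univ (T^[j] x))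
          exact ⟨U, hU, by simpa using hx⟩
        obtain ⟨B, hB, hxB⟩ := this.exists_mem
        exact mem_biUnion hB (hxB rfl))
    exact ⟨F, hFs, hFf, by simpa [sUnion_eq_biUnion] using hFc⟩
  by_contra hinf
  rw [not_finite_iff_infinite] at hinf
  obtain ⟨s, hs⟩ := Infinite.exists_subset_card_eq X (hFf.toFinset.card + 1)
  have hne : s.Nonempty := Finset.card_pos.1 (by omega)
  obtain ⟨m, hm⟩ := hgen ((fun x => ((s.erase x : Finset X) : Set X)ᶜ) '' (s : Set X)) (by
    constructor
    · rintro _ ⟨x, _, rfl⟩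
      exact (s.erase x).finite_toSet.isClosed.isOpen_compl
    · refine eq_univ_of_forall fun y => ?_
      by_cases hy : y ∈ s
      · exact ⟨_, ⟨y, hy, rfl⟩, by simp⟩
      · obtain ⟨x, hx⟩ := hne
        exact ⟨_, ⟨x, hx, rfl⟩, by simp [hy]⟩)
  have hsel : ∀ x, ∃ A ∈ F, T^[m] x ∈ A := fun x => hFc (mem_univ (T^[m] x))
  choose f hfF hf using hsel
  obtain ⟨x, hx, y, hy, hxy, hfxy⟩ := Finset.exists_ne_map_eq_of_card_lt_of_maps_to
    (s := s) (t := hFf.toFinset) (f := f) (by omega) (fun x _ => by simpa using hfF x)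
  have hsm : SmallSet T α m (T^[m] ⁻¹' (f x)) := fun j hj =>
    iter m (f x) (smallSet_of_mem (hFs (hfF x))) j (by omega)
  obtain ⟨B, hB, hsB⟩ := hsm.exists_mem
  obtain ⟨_, ⟨z, hz, rfl⟩, hBz⟩ := hm B hB
  have hxz := hBz (hsB (hf x))
  have hyz := hBz (hsB (show T^[m] y ∈ f x from hfxy ▸ hf y))
  simp only [mem_compl_iff, Finset.mem_coe, Finset.mem_erase, not_and_or, not_not] at hxz hyz
  have e1 : x = z := hxz.resolve_right (fun h => h hx)
  have e2 : y = z := hyz.resolve_right (fun h => h hy)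
  exact hxy (e1.trans e2.symm)
end
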